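/- Let φ ∈ C₀(ℝ) with φ ≠ 0. Then the sup-norm closure of N¹_φ(ℝ) equals C₀(ℝ) ⊕ ℝ·1, i.e., the set of functions of the form f + c·1 with f ∈ C₀(ℝ) and c ∈ ℝ. -/

import Mathlib

open Filter Topology MeasureTheory

noncomputable section

/-- Closure of a set of real-valued functions with respect to the supremum
norm over the whole domain (global uniform convergence). -/
def UnifClosure {α : Type*} (S : Set (α → ℝ)) : Set (α → ℝ) :=
  {f | ∀ ε : ℝ, 0 < ε → ∃ g ∈ S, ∀ x, |f x - g x| ≤ ε}

/-- `N¹_φ(ℝ)`: the linear span of the functions `x ↦ φ(a x + b)`. -/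
def N1R (φ : ℝ → ℝ) : Set (ℝ → ℝ) :=
  ↑(Submodule.span ℝ {f : ℝ → ℝ | ∃ a b : ℝ, f = fun x => φ (a * x + b)})

/-- `C₀(ℝ)`: continuous real-valued functions on `ℝ` vanishing at infinity. -/
def C0R : Set (ℝ → ℝ) :=
  {f | Continuous f ∧ Tendsto f (cocompact ℝ) (𝓝 0)}


/-- Affine precomposition on bounded continuous functions. -/
def affC (f : BoundedContinuousFunction ℝ ℝ) (a b : ℝ) : BoundedContinuousFunction ℝ ℝ :=
  f.compContinuous ⟨fun x => a * x + b, by fun_prop⟩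

lemma affC_apply (f : BoundedContinuousFunction ℝ ℝ) (a b x : ℝ) :
    affC f a b x = f (a * x + b) := rfl

lemma affC_norm_le (f : BoundedContinuousFunction ℝ ℝ) (a b : ℝ) : ‖affC f a b‖ ≤ ‖f‖ := by
  rw [BoundedContinuousFunction.norm_le (norm_nonneg _)]
  intro x
  exact f.norm_coe_le_norm _

lemma int_mem_gen {E : Type*} [NormedAddCommGroup E] [NormedSpace ℝ E] [CompleteSpace E]
    (S : Submodule ℝ E) (hS : IsClosed (S : Set E)) (μ : Measure ℝ)
    (F : ℝ → E) (hF : Integrable F μ) (hm : ∀ s, F s ∈ S) : ∫ s, F s ∂μ ∈ S := by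
  have := hS
  have h := ContinuousLinearMap.integral_comp_comm (𝕜 := ℝ) (Fₗ := E ⧸ S) (μ := μ) (S.mkQL) hF
  have h0 : ∀ s, S.mkQL (F s) = 0 := fun s => (Submodule.Quotient.mk_eq_zero S).2 (hm s)
  simp only [h0, integral_zero] at h
  exact (Submodule.Quotient.mk_eq_zero S).1 h.symm

lemma int_mem (S : Submodule ℝ (BoundedContinuousFunction ℝ ℝ))
    (hS : IsClosed (S : Set (BoundedContinuousFunction ℝ ℝ))) (μ : Measure ℝ)
    (F : ℝ → BoundedContinuousFunction ℝ ℝ) (hF : Integrable F μ) (hm : ∀ s, F s ∈ S) :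
    ∃ G ∈ S, ∀ x, G x = ∫ s, F s x ∂μ := by
  refine ⟨∫ s, F s ∂μ, ?_, ?_⟩
  · exact int_mem_gen S hS μ F hF hm
  · intro x
    exact (ContinuousLinearMap.integral_comp_comm (μ := μ)
      (BoundedContinuousFunction.evalCLM ℝ x) hF).symm

lemma c0_small {f : ℝ → ℝ} (hf : f ∈ C0R) {ε : ℝ} (hε : 0 < ε) :
    ∃ R : ℝ, 0 < R ∧ ∀ x, R < |x| → |f x| < ε := by
  have h := hf.2.eventually (Metric.ball_mem_nhds (0:ℝ) hε)
  have h' := (Metric.hasBasis_cobounded_compl_closedBall (0:ℝ)).mem_iff.1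
    (Metric.cobounded_eq_cocompact (α := ℝ) ▸ h)
  obtain ⟨R, -, hR⟩ := h'
  refine ⟨max R 1, by positivity, fun x hx => ?_⟩
  have : x ∈ (Metric.closedBall (0:ℝ) R)ᶜ := by
    simp only [Set.mem_compl_iff, Metric.mem_closedBall, dist_zero_right, Real.norm_eq_abs, not_le]
    exact lt_of_le_of_lt (le_max_left _ _) hx
  have := hR this
  simpa using this

lemma c0_of_small {f : ℝ → ℝ} (hc : Continuous f)
    (h : ∀ ε : ℝ, 0 < ε → ∃ R : ℝ, ∀ x, R < |x| → |f x| ≤ ε) : f ∈ C0R := by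
  refine ⟨hc, ?_⟩
  rw [← Metric.cobounded_eq_cocompact, Metric.tendsto_nhds]
  intro ε hε
  obtain ⟨R, hR⟩ := h (ε / 2) (by positivity)
  refine (Metric.hasBasis_cobounded_compl_closedBall (0:ℝ)).mem_iff.2 ⟨R, trivial, ?_⟩
  intro x hx
  simp only [Set.mem_compl_iff, Metric.mem_closedBall, dist_zero_right, Real.norm_eq_abs,
    not_le] at hx
  have := hR x hx
  simp only [Set.mem_ofPred_eq, dist_zero_right, Real.norm_eq_abs]
  linarith

lemma c0_uc {f : ℝ → ℝ} (hf : f ∈ C0R) : UniformContinuous f :=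
  hf.1.uniformContinuous_of_tendsto_cocompact hf.2

/-- The bounded continuous function attached to an element of C0. -/
def toB {f : ℝ → ℝ} (hf : f ∈ C0R) : BoundedContinuousFunction ℝ ℝ :=
  ZeroAtInftyContinuousMap.toBCF ⟨⟨f, hf.1⟩, hf.2⟩

lemma toB_apply {f : ℝ → ℝ} (hf : f ∈ C0R) (x : ℝ) : toB hf x = f x := rfl

lemma trans_cont (f : BoundedContinuousFunction ℝ ℝ) (hf : UniformContinuous f) (a : ℝ) :
    Continuous (fun b => affC f a b) := by
  rw [Metric.continuous_iff]
  intro b ε hε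
  obtain ⟨δ, hδ, h⟩ := Metric.uniformContinuous_iff.1 hf (ε / 2) (by positivity)
  refine ⟨δ, hδ, fun c hc => ?_⟩
  refine lt_of_le_of_lt ((BoundedContinuousFunction.dist_le (by positivity : 0 ≤ ε / 2)).2 ?_)
    (by linarith)
  intro x
  refine (h ?_).le
  simpa using hc

lemma dil_cont (f : BoundedContinuousFunction ℝ ℝ) (hf : (f : ℝ → ℝ) ∈ C0R) :
    ContinuousOn (fun a => affC f a 0) (Set.Ioi 0) := by
  intro s hs
  apply ContinuousAt.continuousWithinAt
  simp only [Set.mem_Ioi] at hs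
  rw [Metric.continuousAt_iff]
  intro ε hε
  obtain ⟨R, hR, hRs⟩ := c0_small hf (show 0 < ε / 4 by positivity)
  obtain ⟨δ, hδ, h⟩ := Metric.uniformContinuous_iff.1 (c0_uc hf) (ε / 2) (by positivity)
  refine ⟨min (s / 2) (δ * s / (4 * R)), by positivity, fun {t} ht => ?_⟩
  rw [Real.dist_eq, lt_min_iff] at ht
  obtain ⟨h1, h2⟩ := ht
  refine lt_of_le_of_lt ((BoundedContinuousFunction.dist_le (by positivity : 0 ≤ ε / 2)).2 ?_)
    (by linarith)
  intro x
  have ht2 : s / 2 < t := by have := (abs_lt.1 h1).1; linarith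
  simp only [affC_apply, add_zero]
  by_cases hx : 2 * R / s < |x|
  · rw [div_lt_iff₀ hs] at hx
    have hx1 : R < |t * x| := by
      rw [abs_mul, abs_of_pos (by linarith : 0 < t)]
      nlinarith [abs_nonneg x]
    have hx2 : R < |s * x| := by
      rw [abs_mul, abs_of_pos hs]
      nlinarith [abs_nonneg x]
    have a1 := hRs _ hx1
    have a2 := hRs _ hx2
    rw [Real.dist_eq]
    have := abs_sub (f (t * x)) (f (s * x))
    linarith
  · push Not at hx
    refine (h ?_).le
    rw [Real.dist_eq, ← sub_mul, abs_mul]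
    calc |t - s| * |x| ≤ (δ * s / (4 * R)) * (2 * R / s) := by gcongr
      _ = δ / 2 := by field_simp; ring
      _ < δ := by linarith

/-- averaging over a unit interval -/
def avg (f : ℝ → ℝ) (x : ℝ) : ℝ := ∫ t in x..(x + 1), f t

lemma avg_deriv {f : ℝ → ℝ} (hf : Continuous f) (x : ℝ) :
    HasDerivAt (avg f) (f (x + 1) - f x) x := by
  have e : avg f = fun x => (∫ t in (0:ℝ)..(x + 1), f t) - ∫ t in (0:ℝ)..x, f t := by
    funext x
    rw [avg, intervalIntegral.integral_interval_sub_left] <;> exact hf.intervalIntegrable _ _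
  rw [e]
  have h := fun y => intervalIntegral.integral_hasDerivAt_right (hf.intervalIntegrable 0 y)
    (hf.stronglyMeasurableAtFilter _ _) hf.continuousAt
  exact (HasDerivAt.comp_add_const x 1 (h (x + 1))).sub (h x)

lemma avg_c0 {f : ℝ → ℝ} (hf : f ∈ C0R) : avg f ∈ C0R := by
  refine c0_of_small ?_ ?_
  · exact continuous_iff_continuousAt.2 fun x => (avg_deriv hf.1 x).continuousAt
  intro ε hε
  obtain ⟨R, hR, h⟩ := c0_small hf hε
  refine ⟨R + 1, fun x hx => ?_⟩
  have := intervalIntegral.norm_integral_le_of_norm_le_const (a := x) (b := x + 1) (f := f)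
    (C := ε) (fun t ht => ?_)
  · simpa [avg] using this
  · rw [Set.uIoc_of_le (by linarith)] at ht
    refine (h t ?_).le
    have := abs_sub_abs_le_abs_sub x t
    have h3 : |x - t| ≤ 1 := abs_le.2 ⟨by linarith [ht.2], by linarith [ht.1]⟩
    linarith

lemma avg_ne {f : ℝ → ℝ} (hf : f ∈ C0R) (h0 : f ≠ 0) : avg f ≠ 0 := by
  intro h
  apply h0
  have hp : ∀ x, f (x + 1) = f x := by
    intro x
    have h1 := avg_deriv hf.1 x
    rw [h] at h1
    have := h1.unique (hasDerivAt_const x (0:ℝ))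
    linarith
  have hn : ∀ x, ∀ n : ℕ, f (x + n) = f x := by
    intro x n
    induction n with
    | zero => simp
    | succ k ih => rw [← ih, ← hp (x + k)]; push_cast; ring_nf
  funext x
  by_contra hx
  obtain ⟨R, hR, hh⟩ := c0_small hf (abs_pos.2 hx)
  obtain ⟨n, hn'⟩ := exists_nat_gt (R - x)
  have := hh (x + n) (lt_of_lt_of_le (by linarith) (le_abs_self _))
  rw [hn] at this
  exact lt_irrefl _ this

/-- generators -/
def gens (φ : ℝ → ℝ) : Set (BoundedContinuousFunction ℝ ℝ) :=
  {F | ∃ a b : ℝ, ∀ x, F x = φ (a * x + b)}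

/-- The closed span inside bounded continuous functions. -/
def SS (φ : ℝ → ℝ) : Submodule ℝ (BoundedContinuousFunction ℝ ℝ) :=
  (Submodule.span ℝ (gens φ)).topologicalClosure

lemma SS_closed (φ : ℝ → ℝ) : IsClosed (SS φ : Set (BoundedContinuousFunction ℝ ℝ)) :=
  Submodule.isClosed_topologicalClosure _

lemma SS_unif (φ : ℝ → ℝ) (F : BoundedContinuousFunction ℝ ℝ) (hF : F ∈ SS φ) :
    (F : ℝ → ℝ) ∈ UnifClosure (N1R φ) := by
  intro ε hε
  obtain ⟨G, hG, hd⟩ := Metric.mem_closure_iff.1 hF ε hε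
  refine ⟨G, ?_, fun x => ?_⟩
  · have hG' : G ∈ Submodule.span ℝ (gens φ) := hG
    clear hd hG
    induction hG' using Submodule.span_induction with
    | mem g h =>
      obtain ⟨a, b, h⟩ := h
      exact Submodule.subset_span ⟨a, b, funext h⟩
    | zero => exact Submodule.zero_mem _
    | add f g _ _ hf hg => exact Submodule.add_mem _ hf hg
    | smul c f _ hf => exact Submodule.smul_mem _ c hf
  · have := (BoundedContinuousFunction.dist_coe_le_dist (f := F) (g := G) x).trans hd.le
    rwa [Real.dist_eq] at this

lemma SS_aff (φ : ℝ → ℝ) (F : BoundedContinuousFunction ℝ ℝ) (hF : F ∈ SS φ) (a b : ℝ) :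
    affC F a b ∈ SS φ := by
  have hF' : F ∈ closure (Submodule.span ℝ (gens φ) : Set (BoundedContinuousFunction ℝ ℝ)) := hF
  have hc : Continuous (fun F => affC F a b) :=
    BoundedContinuousFunction.continuous_compContinuous _
  have key : ∀ G ∈ Submodule.span ℝ (gens φ), affC G a b ∈ Submodule.span ℝ (gens φ) := by
    intro G hG
    induction hG using Submodule.span_induction with
    | mem g h =>
      obtain ⟨c, d, h⟩ := h
      refine Submodule.subset_span ⟨c * a, c * b + d, fun x => ?_⟩
      rw [affC_apply, h]; ring_nf
    | zero => exact Submodule.zero_mem _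
    | add f g _ _ hf hg => exact Submodule.add_mem _ hf hg
    | smul c f _ hf => exact Submodule.smul_mem _ c hf
  exact map_mem_closure (f := fun F => affC F a b) hc hF' key

lemma SS_gen (φ : ℝ → ℝ) (F : BoundedContinuousFunction ℝ ℝ) (hF : F ∈ gens φ) : F ∈ SS φ :=
  Submodule.le_topologicalClosure _ (Submodule.subset_span hF)

lemma c0_comp {f : ℝ → ℝ} (hf : f ∈ C0R) {a : ℝ} (ha : a ≠ 0) (b : ℝ) :
    (fun x => f (a * x + b)) ∈ C0R := by
  refine c0_of_small (hf.1.comp (by fun_prop)) ?_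
  intro ε hε
  obtain ⟨R, hR, h⟩ := c0_small hf hε
  refine ⟨(R + |b|) / |a|, fun x hx => (h _ ?_).le⟩
  rw [div_lt_iff₀ (abs_pos.2 ha), mul_comm, ← abs_mul] at hx
  have := abs_sub_abs_le_abs_sub (a * x) (-b)
  rw [abs_neg, sub_neg_eq_add] at this
  linarith

lemma c0_add {f g : ℝ → ℝ} (hf : f ∈ C0R) (hg : g ∈ C0R) : (fun x => f x + g x) ∈ C0R :=
  ⟨hf.1.add hg.1, by simpa using hf.2.add hg.2⟩

lemma c0_smul {f : ℝ → ℝ} (c : ℝ) (hf : f ∈ C0R) : (fun x => c * f x) ∈ C0R :=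
  ⟨continuous_const.mul hf.1, by simpa using hf.2.const_mul c⟩

/-- The kernel: an integrable nonnegative function in the closed span with positive integral. -/
lemma exists_kernel (φ : ℝ → ℝ) (hφ : φ ∈ C0R) (hφ0 : φ ≠ 0) :
    ∃ K ∈ SS φ, Integrable (K : ℝ → ℝ) ∧ UniformContinuous K ∧ 0 < ∫ x, K x := by
  have h1 := avg_c0 hφ
  have h2 := avg_c0 h1
  have h2n := avg_ne h1 (avg_ne hφ hφ0)
  set Ψ1 := avg φ with hΨ1
  set Ψ := avg Ψ1 with hΨ
  have d1 : ∀ x, HasDerivAt Ψ1 (φ (x + 1) - φ x) x := avg_deriv hφ.1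
  have d2 : ∀ x, HasDerivAt Ψ (Ψ1 (x + 1) - Ψ1 x) x := avg_deriv h1.1
  obtain ⟨x0, c, hcx, hmax, hc⟩ : ∃ x0 c, Ψ x0 = c ∧ (∀ y, |Ψ y| ≤ |c|) ∧ c ≠ 0 := by
    obtain ⟨z, hz⟩ := Function.ne_iff.1 h2n
    obtain ⟨x0, hx0⟩ := (h2.1.abs).exists_forall_ge' z (by
      have := (h2.2.abs).eventually (gt_mem_nhds (show |(0:ℝ)| < |Ψ z| by
        rw [abs_zero]; exact abs_pos.2 hz))
      filter_upwards [this] with x hx using le_of_lt hx)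
    refine ⟨x0, _, rfl, hx0, ?_⟩
    have := hx0 z
    intro h
    rw [h, abs_zero] at this
    exact hz (abs_eq_zero.1 (le_antisymm this (abs_nonneg _)))
  set D : ℝ → ℝ := fun x => φ (x + 2) - 2 * φ (x + 1) + φ x with hD
  have hDc : D ∈ C0R := by
    have a1 := c0_comp hφ one_ne_zero 2
    have a2 := c0_smul (-2) (c0_comp hφ one_ne_zero 1)
    have := c0_add (c0_add a1 a2) hφ
    convert this using 2
    simp only [hD, one_mul]; ring
  set Q : ℝ → ℝ := fun x => -c * (D (1 * x + x0) + D (-1 * x + x0)) with hQ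
  have hQc : Q ∈ C0R :=
    c0_smul (-c) (c0_add (c0_comp hDc one_ne_zero x0) (c0_comp hDc (by norm_num) x0))
  have hDS : toB hDc ∈ SS φ := by
    have e : toB hDc = affC (toB hφ) 1 2 - (2:ℝ) • affC (toB hφ) 1 1 + affC (toB hφ) 1 0 := by
      ext x
      simp [affC_apply, toB_apply, hD]
    have m : ∀ b, affC (toB hφ) 1 b ∈ SS φ := fun b => SS_gen φ _ ⟨1, b, fun x => rfl⟩
    rw [e]
    exact Submodule.add_mem _ (Submodule.sub_mem _ (m _) (Submodule.smul_mem _ _ (m _))) (m _)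
  have hQS : toB hQc ∈ SS φ := by
    have e : toB hQc = (-c) • (affC (toB hDc) 1 x0 + affC (toB hDc) (-1) x0) := by
      ext x
      simp [affC_apply, toB_apply, hQ]
      ring
    rw [e]
    exact Submodule.smul_mem _ _ (Submodule.add_mem _ (SS_aff _ _ hDS _ _) (SS_aff _ _ hDS _ _))
  obtain ⟨K, hKS, hK⟩ := int_mem (SS φ) (SS_closed φ) (volume.restrict (Set.Ioc 0 1))
    (fun s => (1 - s) • affC (toB hQc) s 0) (by
      have hco : ContinuousOn (fun s : ℝ => (1 - s) • affC (toB hQc) s 0) (Set.Ioc 0 1) := by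
        have hl : ContinuousOn (fun s : ℝ => 1 - s) (Set.Ioc 0 1) := by fun_prop
        refine hl.smul ((dil_cont (toB hQc) hQc).mono ?_)
        intro s hs; exact hs.1
      refine Integrable.of_bound (hco.aestronglyMeasurable measurableSet_Ioc) (‖toB hQc‖) ?_
      refine (ae_restrict_iff' measurableSet_Ioc).2 (Eventually.of_forall fun s hs => ?_)
      rw [norm_smul]
      have := affC_norm_le (toB hQc) s 0
      have h3 : ‖1 - s‖ ≤ 1 := by
        rw [Real.norm_eq_abs, abs_le]; constructor <;> linarith [hs.1, hs.2]
      calc _ ≤ 1 * ‖toB hQc‖ := by gcongr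
        _ = _ := one_mul _)
    (fun s => Submodule.smul_mem _ _ (SS_aff _ _ hQS _ _))
  have hKx : ∀ x, K x * x ^ 2 = 2 * c ^ 2 - c * Ψ (x0 + x) - c * Ψ (x0 - x) := by
    intro x
    have e : K x = ∫ s in (0:ℝ)..1, (1 - s) * Q (s * x) := by
      rw [hK, intervalIntegral.integral_of_le zero_le_one]
      simp [affC_apply, toB_apply]
    rw [e, ← intervalIntegral.integral_mul_const]
    set G : ℝ → ℝ := fun s => -c * ((1 - s) * x * ((Ψ1 (x0 + s * x + 1) - Ψ1 (x0 + s * x))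
      - (Ψ1 (x0 - s * x + 1) - Ψ1 (x0 - s * x))) + Ψ (x0 + s * x) + Ψ (x0 - s * x)) with hG
    have hder : ∀ s ∈ Set.uIcc (0:ℝ) 1,
        HasDerivAt G ((1 - s) * Q (s * x) * x ^ 2) s := by
      intro s _
      have l1 : HasDerivAt (fun s : ℝ => x0 + s * x) x s := by
        simpa using ((hasDerivAt_id s).mul_const x).const_add x0
      have l2 : HasDerivAt (fun s : ℝ => x0 - s * x) (-x) s := by
        simpa using ((hasDerivAt_id s).mul_const x).const_sub x0
      have l3 : HasDerivAt (fun s : ℝ => (1 - s) * x) (-x) s := by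
        simpa using ((hasDerivAt_id s).const_sub 1).mul_const x
      have p1 := (d1 (x0 + s * x + 1)).comp s (l1.add_const 1)
      have p2 := (d1 (x0 + s * x)).comp s l1
      have p3 := (d1 (x0 - s * x + 1)).comp s (l2.add_const 1)
      have p4 := (d1 (x0 - s * x)).comp s l2
      have p5 := (d2 (x0 + s * x)).comp s l1
      have p6 := (d2 (x0 - s * x)).comp s l2
      have := (((l3.mul ((p1.sub p2).sub (p3.sub p4))).add p5).add p6).const_mul (-c)
      refine this.congr_deriv ?_
      simp only [hQ, hD, Function.comp, Pi.sub_apply]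
      have e1 : x0 + s * x + 1 + 1 = 1 * (s * x) + x0 + 2 := by ring
      have e2 : x0 + s * x + 1 = 1 * (s * x) + x0 + 1 := by ring
      have e3 : x0 + s * x = 1 * (s * x) + x0 := by ring
      have e4 : x0 - s * x + 1 + 1 = -1 * (s * x) + x0 + 2 := by ring
      have e5 : x0 - s * x + 1 = -1 * (s * x) + x0 + 1 := by ring
      have e6 : x0 - s * x = -1 * (s * x) + x0 := by ring
      rw [e1, e2, e3, e4, e5, e6]
      ring
    rw [intervalIntegral.integral_eq_sub_of_hasDerivAt hder]
    · simp only [hG, zero_mul, one_mul, add_zero, sub_zero, sub_self, hcx]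
      ring
    · apply Continuous.intervalIntegrable
      have := hQc.1
      fun_prop
  have hcm : ∀ y, |c * Ψ y| ≤ c ^ 2 := by
    intro y
    rw [abs_mul, ← sq_abs c, sq]
    exact mul_le_mul_of_nonneg_left (hmax y) (abs_nonneg _)
  have hKb : ∀ x, |K x| ≤ (‖K‖ + 4 * c ^ 2) * (1 + x ^ 2)⁻¹ := by
    intro x
    rw [← div_eq_mul_inv, le_div_iff₀ (by positivity), mul_add, mul_one]
    have a1 : |K x| ≤ ‖K‖ := K.norm_coe_le_norm x
    have a2 : |K x| * x ^ 2 = |K x * x ^ 2| := by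
      rw [abs_mul, abs_of_nonneg (sq_nonneg x)]
    have a3 : |K x * x ^ 2| ≤ 4 * c ^ 2 := by
      rw [hKx]
      have b1 := abs_le.1 (hcm (x0 + x))
      have b2 := abs_le.1 (hcm (x0 - x))
      rw [abs_le]; constructor <;> nlinarith [sq_nonneg c]
    linarith
  have hKi : Integrable (K : ℝ → ℝ) :=
    (integrable_inv_one_add_sq.const_mul (‖K‖ + 4 * c ^ 2)).mono'
      K.continuous.aestronglyMeasurable (Eventually.of_forall hKb)
  have hKc : (K : ℝ → ℝ) ∈ C0R := by
    refine c0_of_small K.continuous fun ε hε => ⟨(‖K‖ + 4 * c ^ 2) / ε + 1, fun x hx => ?_⟩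
    refine (hKb x).trans ?_
    rw [← div_eq_mul_inv, div_le_iff₀ (by positivity)]
    have q : (‖K‖ + 4 * c ^ 2) / ε < |x| := by linarith
    have q2 : 1 ≤ |x| := by
      have : 0 ≤ (‖K‖ + 4 * c ^ 2) / ε := by positivity
      linarith
    rw [div_lt_iff₀ hε] at q
    rw [← sq_abs x]
    nlinarith [mul_le_mul_of_nonneg_left q2 (mul_nonneg (abs_nonneg x) hε.le)]
  have hK0 : ∀ x, 0 ≤ K x := by
    have hd := dense_compl_singleton (0:ℝ)
    have hcl : IsClosed {x | 0 ≤ K x} := isClosed_le continuous_const K.continuous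
    have hsub : ({0}ᶜ : Set ℝ) ⊆ {x | 0 ≤ K x} := by
      intro x hx
      have hx0 : 0 < x ^ 2 := by
        have : x ≠ 0 := hx
        positivity
      have b1 := abs_le.1 (hcm (x0 + x))
      have b2 := abs_le.1 (hcm (x0 - x))
      have : 0 ≤ K x * x ^ 2 := by rw [hKx]; linarith
      exact nonneg_of_mul_nonneg_left this hx0
    intro x
    exact hcl.closure_subset_iff.2 hsub (hd x)
  refine ⟨K, hKS, hKi, c0_uc hKc, ?_⟩
  obtain ⟨R, hR, hRs⟩ := c0_small h2 (abs_pos.2 hc)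
  refine integral_pos_of_integrable_nonneg_nonzero (x := R + |x0| + 1) K.continuous hKi hK0 ?_
  intro h
  have := hKx (R + |x0| + 1)
  rw [h, zero_mul] at this
  have s1 := hRs (x0 + (R + |x0| + 1)) (lt_of_lt_of_le
    (by linarith [neg_abs_le x0]) (le_abs_self _))
  have b2 := abs_le.1 (hcm (x0 - (R + |x0| + 1)))
  have s2 : |c * Ψ (x0 + (R + |x0| + 1))| < c ^ 2 := by
    rw [abs_mul, ← sq_abs c, sq]
    exact mul_lt_mul_of_pos_left s1 (abs_pos.2 hc)
  have s3 := abs_lt.1 s2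
  linarith

lemma compact_mem (φ : ℝ → ℝ) (K : BoundedContinuousFunction ℝ ℝ) (hK : K ∈ SS φ)
    (hKi : Integrable (K : ℝ → ℝ)) (hKu : UniformContinuous K) (hKp : 0 < ∫ x, K x)
    (f : BoundedContinuousFunction ℝ ℝ) (hfc : HasCompactSupport f) : f ∈ SS φ := by
  have hfu : UniformContinuous f :=
    f.continuous.uniformContinuous_of_tendsto_cocompact hfc.is_zero_at_infty
  set I := ∫ x, K x with hI
  have step : ∀ n : ℕ, ∃ H ∈ SS φ, ∀ x, H x = ∫ u, f (x - u / (n + 1)) * K u := by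
    intro n
    have hn : (0:ℝ) < n + 1 := by positivity
    obtain ⟨H, hH, hHx⟩ := int_mem (SS φ) (SS_closed φ) volume
      (fun y => f y • (((n:ℝ) + 1) • affC K (n + 1) (-((n + 1) * y)))) (by
        apply Continuous.integrable_of_hasCompactSupport
        · have hl : Continuous fun y : ℝ => affC K (n + 1) (-((n + 1) * y)) :=
            (trans_cont K hKu (n + 1)).comp
              (by fun_prop : Continuous fun y : ℝ => -(((n:ℝ) + 1) * y))
          exact f.continuous.smul (hl.const_smul ((n:ℝ) + 1))
        · exact hfc.smul_right)
      (fun y => Submodule.smul_mem _ _ (Submodule.smul_mem _ _ (SS_aff _ _ hK _ _)))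
    refine ⟨H, hH, fun x => ?_⟩
    rw [hHx]
    set G : ℝ → ℝ := fun u => f (x - u / (n + 1)) * K u with hG
    have e1 := Measure.integral_comp_mul_left G ((n:ℝ) + 1)
    have e2 := integral_sub_left_eq_self (fun z => G (((n:ℝ) + 1) * z)) volume x
    rw [e1, abs_of_pos (by positivity), smul_eq_mul] at e2
    have e3 : ∫ u, G u = (n + 1) * ∫ y, G (((n:ℝ) + 1) * (x - y)) := by
      rw [e2]; field_simp
    rw [e3, ← integral_const_mul]
    congr 1
    funext y
    simp only [hG, BoundedContinuousFunction.coe_smul, affC_apply, smul_eq_mul]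
    have a1 : x - ((n:ℝ) + 1) * (x - y) / (n + 1) = y := by field_simp; ring
    rw [a1]
    ring_nf
  choose H hH hHx using step
  set ω : ℝ → ℝ := fun t => ‖affC f 1 (-t) - f‖ with hω
  have hωc : Continuous ω :=
    ((trans_cont f hfu 1).comp continuous_neg |>.sub continuous_const).norm
  have hω0 : ω 0 = 0 := by
    have : affC f 1 (-0) = f := by ext x; simp [affC_apply]
    simp only [hω, this, sub_self, norm_zero]
  have hωb : ∀ t, ω t ≤ 2 * ‖f‖ := by
    intro t
    have := norm_sub_le (affC f 1 (-t)) f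
    have := affC_norm_le f 1 (-t)
    simp only [hω]; linarith
  have hωp : ∀ t, 0 ≤ ω t := fun t => norm_nonneg _
  have hωx : ∀ t x, |f (x - t) - f x| ≤ ω t := by
    intro t x
    have := (affC f 1 (-t) - f).norm_coe_le_norm x
    have e : (affC f 1 (-t) - f) x = f (x - t) - f x := by
      simp [affC_apply, sub_eq_add_neg]
    rwa [e] at this
  have hbi : ∀ n : ℕ, Integrable (fun u => ω (u / (n + 1)) * |K u|) := by
    intro n
    refine (hKi.norm.const_mul (2 * ‖f‖)).mono' ?_ (Eventually.of_forall fun u => ?_)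
    · have := K.continuous
      exact ((hωc.comp (by fun_prop : Continuous fun u : ℝ => u / ((n:ℝ) + 1))).mul
        this.abs).aestronglyMeasurable
    · rw [Real.norm_eq_abs, abs_of_nonneg (mul_nonneg (hωp _) (abs_nonneg _))]
      exact mul_le_mul_of_nonneg_right (hωb _) (abs_nonneg _)
  have hbound : ∀ n, ‖H n - I • f‖ ≤ ∫ u, ω (u / (n + 1)) * |K u| := by
    intro n
    rw [BoundedContinuousFunction.norm_le
      (integral_nonneg fun u => mul_nonneg (hωp _) (abs_nonneg _))]
    intro x
    have hi1 : Integrable (fun u => f (x - u / (n + 1)) * K u) := by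
      refine hKi.bdd_mul (c := ‖f‖) ?_ (Eventually.of_forall fun u => f.norm_coe_le_norm _)
      have := f.continuous
      exact (this.comp (by fun_prop : Continuous fun u : ℝ => x - u / ((n:ℝ) + 1))).aestronglyMeasurable
    have e : (H n - I • f) x = ∫ u, (f (x - u / (n + 1)) - f x) * K u := by
      simp only [sub_mul]
      rw [integral_sub hi1 (hKi.const_mul _), integral_const_mul]
      simp [hHx, hI, mul_comm]
    rw [e]
    refine norm_integral_le_of_norm_le (hbi n) (Eventually.of_forall fun u => ?_)
    rw [norm_mul]
    exact mul_le_mul_of_nonneg_right (hωx _ _) (abs_nonneg _)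
  have hlim : Tendsto (fun n : ℕ => ∫ u, ω (u / (n + 1)) * |K u|) atTop (𝓝 0) := by
    have : (0:ℝ) = ∫ u : ℝ, (0:ℝ) := by simp
    rw [this]
    refine tendsto_integral_of_dominated_convergence (fun u => 2 * ‖f‖ * |K u|)
      (fun n => (hbi n).aestronglyMeasurable) (hKi.norm.const_mul (2 * ‖f‖)) ?_ ?_
    · intro n
      refine Eventually.of_forall fun u => ?_
      rw [Real.norm_eq_abs, abs_of_nonneg (mul_nonneg (hωp _) (abs_nonneg _))]
      exact mul_le_mul_of_nonneg_right (hωb _) (abs_nonneg _)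
    · refine Eventually.of_forall fun u => ?_
      have t1 : Tendsto (fun n : ℕ => u / ((n:ℝ) + 1)) atTop (𝓝 0) := by
        simpa [div_eq_mul_inv] using (tendsto_one_div_add_atTop_nhds_zero_nat (𝕜 := ℝ)).const_mul u
      have t2 := (hωc.tendsto 0).comp t1
      rw [hω0] at t2
      simpa using t2.mul_const |K u|
  have hT : Tendsto H atTop (𝓝 (I • f)) := by
    rw [tendsto_iff_norm_sub_tendsto_zero]
    exact squeeze_zero (fun n => norm_nonneg _) hbound hlim
  have hIf : I • f ∈ SS φ := (SS_closed φ).mem_of_tendsto hT (Eventually.of_forall hH)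
  have := Submodule.smul_mem (SS φ) I⁻¹ hIf
  rwa [smul_smul, inv_mul_cancel₀ hKp.ne', one_smul] at this

lemma c0_mem (φ : ℝ → ℝ) (hφ : φ ∈ C0R) (hφ0 : φ ≠ 0) {f : ℝ → ℝ} (hf : f ∈ C0R) :
    f ∈ UnifClosure (N1R φ) := by
  obtain ⟨K, hK, hKi, hKu, hKp⟩ := exists_kernel φ hφ hφ0
  apply SS_unif φ (toB hf)
  rw [← SetLike.mem_coe, ← (SS_closed φ).closure_eq, Metric.mem_closure_iff]
  intro ε hε
  set g : ℝ → ℝ := fun x => f x - max (-(ε / 2)) (min (f x) (ε / 2)) with hg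
  obtain ⟨R, hR, hRs⟩ := c0_small hf (show 0 < ε / 2 by positivity)
  have hg0 : ∀ x, R < |x| → g x = 0 := by
    intro x hx
    have := abs_lt.1 (hRs x hx)
    simp only [hg]
    rw [min_eq_left this.2.le, max_eq_right this.1.le, sub_self]
  have hgc : Continuous g := by
    have := hf.1
    fun_prop
  have hgC : g ∈ C0R := c0_of_small hgc fun δ hδ => ⟨R, fun x hx => by
    rw [hg0 x hx, abs_zero]; exact hδ.le⟩
  have hsupp : HasCompactSupport g := by
    refine HasCompactSupport.intro (isCompact_closedBall (0:ℝ) R) fun x hx => hg0 x ?_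
    simpa using hx
  refine ⟨toB hgC, compact_mem φ K hK hKi hKu hKp (toB hgC) hsupp, ?_⟩
  refine lt_of_le_of_lt ((BoundedContinuousFunction.dist_le (by positivity : 0 ≤ ε / 2)).2 ?_)
    (by linarith)
  intro x
  rw [toB_apply, toB_apply, Real.dist_eq]
  simp only [hg, sub_sub_cancel]
  rw [abs_le]
  exact ⟨le_max_left _ _, max_le (by linarith) (min_le_right _ _)⟩

lemma n1_form (φ : ℝ → ℝ) (hφ : φ ∈ C0R) {g : ℝ → ℝ} (hg : g ∈ N1R φ) :
    ∃ f ∈ C0R, ∃ c : ℝ, g = fun x => f x + c := by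
  have hz : (fun _ => 0 : ℝ → ℝ) ∈ C0R := ⟨continuous_const, tendsto_const_nhds⟩
  have hg' : g ∈ Submodule.span ℝ {f : ℝ → ℝ | ∃ a b : ℝ, f = fun x => φ (a * x + b)} := hg
  clear hg
  induction hg' using Submodule.span_induction with
  | mem g h =>
    obtain ⟨a, b, rfl⟩ := h
    by_cases ha : a = 0
    · exact ⟨_, hz, φ b, by simp [ha]⟩
    · exact ⟨_, c0_comp hφ ha b, 0, by simp⟩
  | zero => exact ⟨_, hz, 0, by funext x; simp⟩
  | add f g _ _ hf hg =>
    obtain ⟨f1, h1, c1, rfl⟩ := hf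
    obtain ⟨f2, h2, c2, rfl⟩ := hg
    exact ⟨_, c0_add h1 h2, c1 + c2, by funext x; simp only [Pi.add_apply]; ring⟩
  | smul c f _ hf =>
    obtain ⟨f1, h1, c1, rfl⟩ := hf
    exact ⟨_, c0_smul c h1, c * c1, by funext x; simp only [Pi.smul_apply, smul_eq_mul]; ring⟩

/-- For nonzero `φ ∈ C₀(ℝ)`, the uniform closure of `N¹_φ(ℝ)` is
`C₀(ℝ) ⊕ ℝ·1`. -/
theorem stmt5 (φ : ℝ → ℝ) (hφ : φ ∈ C0R) (hφ0 : φ ≠ 0) :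
    UnifClosure (N1R φ) = {h : ℝ → ℝ | ∃ f ∈ C0R, ∃ c : ℝ, h = fun x => f x + c} := by
  apply Set.Subset.antisymm
  · intro h hh
    have hcont : Continuous h := by
      rw [Metric.continuous_iff]
      intro x ε hε
      obtain ⟨g, hg, hd⟩ := hh (ε / 4) (by positivity)
      obtain ⟨f, hf, c, rfl⟩ := n1_form φ hφ hg
      obtain ⟨δ, hδ, hfd⟩ := Metric.continuous_iff.1 hf.1 x (ε / 4) (by positivity)
      refine ⟨δ, hδ, fun y hy => ?_⟩
      have a := abs_lt.1 (hfd y hy)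
      have b := abs_le.1 (hd x)
      have b2 := abs_le.1 (hd y)
      rw [Real.dist_eq, abs_lt]
      constructor <;> linarith [a.1, a.2, b.1, b.2, b2.1, b2.2]
    have hcau : Cauchy (map h (cocompact ℝ)) := by
      rw [Metric.cauchy_iff]
      refine ⟨inferInstance, fun ε hε => ?_⟩
      obtain ⟨g, hg, hd⟩ := hh (ε / 8) (by positivity)
      obtain ⟨f, hf, c, rfl⟩ := n1_form φ hφ hg
      have hev := hf.2.eventually (Metric.ball_mem_nhds (0:ℝ) (show 0 < ε / 8 by positivity))
      refine ⟨Set.image h {x | f x ∈ Metric.ball 0 (ε / 8)}, image_mem_map hev, ?_⟩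
      rintro _ ⟨x, hx, rfl⟩ _ ⟨y, hy, rfl⟩
      have hx' : |f x| < ε / 8 := by simpa using hx
      have hy' : |f y| < ε / 8 := by simpa using hy
      have a1 := abs_lt.1 hx'
      have a2 := abs_lt.1 hy'
      have b := abs_le.1 (hd x)
      have b2 := abs_le.1 (hd y)
      rw [Real.dist_eq, abs_lt]
      constructor <;> linarith [a1.1, a1.2, a2.1, a2.2, b.1, b.2, b2.1, b2.2]
    obtain ⟨c, hc⟩ := CompleteSpace.complete hcau
    have hc' : Tendsto h (cocompact ℝ) (𝓝 c) := hc
    refine ⟨fun x => h x - c, ⟨hcont.sub continuous_const, ?_⟩, c, by simp⟩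
    simpa using hc'.sub_const c
  · rintro _ ⟨f, hf, c, rfl⟩
    intro ε hε
    obtain ⟨g, hg, hd⟩ := c0_mem φ hφ hφ0 hf ε hε
    obtain ⟨b, hb⟩ := Function.ne_iff.1 hφ0
    have hb' : φ b ≠ 0 := hb
    have hk : (fun x => φ (0 * x + b)) ∈
        Submodule.span ℝ {f : ℝ → ℝ | ∃ a b : ℝ, f = fun x => φ (a * x + b)} :=
      Submodule.subset_span ⟨0, b, rfl⟩
    refine ⟨_, Submodule.add_mem _ hg (Submodule.smul_mem _ (c / φ b) hk), fun x => ?_⟩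
    have e : f x + c - (g + (c / φ b) • fun x => φ (0 * x + b)) x = f x - g x := by
      simp only [Pi.add_apply, Pi.smul_apply, smul_eq_mul, zero_mul, zero_add]
      field_simp
      ring
    rw [e]
    exact hd x
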